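/- Let G be a d-dimensional simplicial complex on vertex set Fin n with incidence matrix ∂ and Laplacian matrix L_G = ∂ · ∂ᵀ, and let R ⊆ G_{d-1} be a root of G, i.e. the rows of ∂ indexed by R̄ = G_{d-1} \ R form a basis of the row space of ∂. Then Σ over all spanning forests F of G of det(∂_{R̄,F})² = det(L_G^R), where a spanning forest of G is a subset F ⊆ G_d such that the columns of ∂ indexed by F form a basis of the column space of ∂, and L_G^R is the submatrix of L_G obtained by deleting the rows and columns indexed by the elements of R. -/

import Mathlib

open Finset

/-- `G` is a `d`-dimensional simplicial complex on vertex set `Fin n`. -/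
def IsComplex (n d : ℕ) (G : Finset (Finset (Fin n))) : Prop :=
  (∀ f ∈ G, ∀ g ⊆ f, g ∈ G) ∧ (∀ f ∈ G, f.card ≤ d + 1) ∧ ∃ f ∈ G, f.card = d + 1

/-- The `k`-dimensional faces of `G` (faces of cardinality `k+1`). -/
def faces {n : ℕ} (G : Finset (Finset (Fin n))) (k : ℕ) : Finset (Finset (Fin n)) :=
  G.filter fun f => f.card = k + 1

/-- Incidence entry `∂[r,f]`: equals `(-1)^j` if `r` is obtained from `f` by deleting
its `j`-th smallest element (indexing from 0), and `0` if `r ⊄ f`. -/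
def incEntry {n : ℕ} (r f : Finset (Fin n)) : ℤ :=
  if r ⊆ f then
    (-1 : ℤ) ^ ((f \ r).sum fun v => (f.filter fun w => w < v).card)
  else 0

/-- `F` is a forest of the `d`-dimensional complex `G`: the columns of the incidence
matrix indexed by `F` are linearly independent over `ℚ`. -/
def IsForest (n d : ℕ) (G F : Finset (Finset (Fin n))) : Prop :=
  F ⊆ faces G d ∧
    LinearIndependent ℚ fun f : F => fun r : faces G (d - 1) => (incEntry r.1 f.1 : ℚ)

/-- `R` is a root of `F`: the rows indexed by `R̄ = G_{d-1} \ R` of the submatrix of the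
incidence matrix with column set `F` are linearly independent and span the row space of
that submatrix. -/
def IsRoot (n d : ℕ) (G F R : Finset (Finset (Fin n))) : Prop :=
  R ⊆ faces G (d - 1) ∧
    LinearIndependent ℚ
      (fun r : (faces G (d - 1) \ R : Finset (Finset (Fin n))) =>
        fun f : F => (incEntry r.1 f.1 : ℚ)) ∧
    Submodule.span ℚ
        (Set.range fun r : (faces G (d - 1) \ R : Finset (Finset (Fin n))) =>
          fun f : F => (incEntry r.1 f.1 : ℚ)) =
      Submodule.span ℚ
        (Set.range fun r : (faces G (d - 1) : Finset (Finset (Fin n))) =>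
          fun f : F => (incEntry r.1 f.1 : ℚ))

/-- `(F,R)` is a rooted forest of the `d`-dimensional complex `G`. -/
def IsRootedForest (n d : ℕ) (G F R : Finset (Finset (Fin n))) : Prop :=
  IsForest n d G F ∧ IsRoot n d G F R


/-- `F` is a spanning forest of `G`: the columns of the incidence matrix indexed by `F`
form a basis of the column space of the incidence matrix. -/
def IsSpanningForest (n d : ℕ) (G F : Finset (Finset (Fin n))) : Prop :=
  F ⊆ faces G d ∧
    LinearIndependent ℚ
      (fun f : F => fun r : faces G (d - 1) => (incEntry r.1 f.1 : ℚ)) ∧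
    Submodule.span ℚ
        (Set.range fun f : F =>
          fun r : (faces G (d - 1) : Finset (Finset (Fin n))) => (incEntry r.1 f.1 : ℚ)) =
      Submodule.span ℚ
        (Set.range fun f : (faces G d : Finset (Finset (Fin n))) =>
          fun r : (faces G (d - 1) : Finset (Finset (Fin n))) => (incEntry r.1 f.1 : ℚ))

/-- `R` is a root of `G`: the rows of the incidence matrix indexed by `R̄ = G_{d-1} \ R`
form a basis of the row space of the incidence matrix. -/
def IsRootOfComplex (n d : ℕ) (G R : Finset (Finset (Fin n))) : Prop :=
  R ⊆ faces G (d - 1) ∧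
    LinearIndependent ℚ
      (fun r : (faces G (d - 1) \ R : Finset (Finset (Fin n))) =>
        fun f : (faces G d : Finset (Finset (Fin n))) => (incEntry r.1 f.1 : ℚ)) ∧
    Submodule.span ℚ
        (Set.range fun r : (faces G (d - 1) \ R : Finset (Finset (Fin n))) =>
          fun f : (faces G d : Finset (Finset (Fin n))) => (incEntry r.1 f.1 : ℚ)) =
      Submodule.span ℚ
        (Set.range fun r : (faces G (d - 1) : Finset (Finset (Fin n))) =>
          fun f : (faces G d : Finset (Finset (Fin n))) => (incEntry r.1 f.1 : ℚ))

/-- The incidence matrix `∂` of the `d`-dimensional complex `G`. -/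
def incMatrix (n d : ℕ) (G : Finset (Finset (Fin n))) :
    Matrix (faces G (d - 1) : Finset (Finset (Fin n)))
      (faces G d : Finset (Finset (Fin n))) ℤ :=
  Matrix.of fun r f => incEntry r.1 f.1

/-- The Laplacian matrix `L_G = ∂ · ∂ᵀ`. -/
def lapMat (n d : ℕ) (G : Finset (Finset (Fin n))) :
    Matrix (faces G (d - 1) : Finset (Finset (Fin n)))
      (faces G (d - 1) : Finset (Finset (Fin n))) ℤ :=
  incMatrix n d G * (incMatrix n d G).transpose

/-- The square submatrix `∂_{R̄,F}` of the incidence matrix, with rows indexed by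
`R̄ = G_{d-1} \ R` and columns indexed by `F` (identified with `R̄` via `e`). -/
def subMat (n d : ℕ) (G F R : Finset (Finset (Fin n)))
    (e : (faces G (d - 1) \ R : Finset (Finset (Fin n))) ≃ F) :
    Matrix (faces G (d - 1) \ R : Finset (Finset (Fin n)))
      (faces G (d - 1) \ R : Finset (Finset (Fin n))) ℤ :=
  Matrix.of fun r r' => incEntry r.1 (e r').1

/-!
The determinant of the reduced Laplacian `∂_{R̄} ∂_{R̄}ᵀ` expands by the Cauchy–Binet formula into
the squares `det(∂_{R̄,F})²` over all `F ⊆ G_d` with `|F| = |R̄|`. As `R̄` is a row basis, `|R̄|` is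
the rank of `∂`; hence a set `F` of this size with a nonzero minor is a column basis, and conversely
every column basis has this size.

The Cauchy–Binet formula is used in the form `det(A B) = Σ_F det(A_F B_F)`, where `A_F B_F` is a
product of submatrices which is again square, so that no bijection between the rows of `A` and `F`
has to be chosen.
-/

open Matrix

section CauchyBinet

variable {m n R : Type*} [Fintype m] [DecidableEq m] [CommRing R]

theorem det_submatrix_mul_submatrix_eq_sum_piFinset (A : Matrix m n R) (B : Matrix n m R)
    (t : Finset n) :
    (A.submatrix id ((↑) : t → n) * B.submatrix ((↑) : t → n) id).det =
      ∑ p ∈ Fintype.piFinset fun _ : m ↦ t, (A.submatrix id p).det * ∏ i, B (p i) i := by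
  have entry (i j : m) : (A.submatrix id ((↑) : t → n) * B.submatrix ((↑) : t → n) id) i j =
      ∑ k ∈ t, A i k * B k j :=
    sum_coe_sort t fun k ↦ A i k * B k j
  simp only [det_apply', entry, prod_univ_sum, mul_sum, sum_mul, submatrix_apply, id_eq]
  rw [sum_comm]
  simp only [prod_mul_distrib, mul_assoc]

theorem det_submatrix_mul_submatrix_eq_sum_injective [DecidableEq n] (A : Matrix m n R)
    (B : Matrix n m R) (t : Finset n) :
    (A.submatrix id ((↑) : t → n) * B.submatrix ((↑) : t → n) id).det =
      ∑ p ∈ Fintype.piFinset fun _ : m ↦ t with p.Injective,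
        (A.submatrix id p).det * ∏ i, B (p i) i := by
  rw [det_submatrix_mul_submatrix_eq_sum_piFinset]
  refine (sum_filter_of_ne fun p _ hp i j hij ↦ ?_).symm
  by_contra hne
  exact hp (by rw [det_zero_of_column_eq hne fun k ↦ by simp [hij], zero_mul])

theorem filter_injective_image_eq [DecidableEq n] {t F : Finset n} (hFt : F ⊆ t)
    (hF : #F = Fintype.card m) :
    {p ∈ {p ∈ Fintype.piFinset fun _ : m ↦ t | p.Injective} | univ.image p = F} =
      {p ∈ Fintype.piFinset fun _ : m ↦ F | p.Injective} := by
  ext p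
  simp only [mem_filter, Fintype.mem_piFinset]
  constructor
  · rintro ⟨⟨-, hp⟩, rfl⟩
    exact ⟨fun i ↦ mem_image_of_mem p (mem_univ i), hp⟩
  · rintro ⟨hpF, hp⟩
    refine ⟨⟨fun i ↦ hFt (hpF i), hp⟩, eq_of_subset_of_card_le ?_ ?_⟩
    · simpa [image_subset_iff] using hpF
    · rw [card_image_of_injective _ hp, card_univ, hF]

theorem cauchy_binet (A : Matrix m n R) (B : Matrix n m R) (t : Finset n) :
    (A.submatrix id ((↑) : t → n) * B.submatrix ((↑) : t → n) id).det =
      ∑ F ∈ t.powersetCard (Fintype.card m),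
        (A.submatrix id ((↑) : F → n) * B.submatrix ((↑) : F → n) id).det := by
  classical
  have image_mem : ∀ p ∈ {p ∈ Fintype.piFinset fun _ : m ↦ t | p.Injective},
      univ.image p ∈ t.powersetCard (Fintype.card m) := fun p hp ↦ by
    obtain ⟨hpt, hp⟩ := mem_filter.mp hp
    rw [mem_powersetCard, card_image_of_injective _ hp, card_univ]
    exact ⟨image_subset_iff.mpr fun i _ ↦ Fintype.mem_piFinset.mp hpt i, rfl⟩
  rw [det_submatrix_mul_submatrix_eq_sum_injective, ← sum_fiberwise_of_maps_to image_mem]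
  refine sum_congr rfl fun F hF ↦ ?_
  obtain ⟨hFt, hFm⟩ := mem_powersetCard.mp hF
  rw [filter_injective_image_eq hFt hFm, det_submatrix_mul_submatrix_eq_sum_injective]

end CauchyBinet

theorem det_mul_transpose_eq_sq {m k R : Type*} [Fintype m] [DecidableEq m] [Fintype k]
    [CommRing R] (M : Matrix m k R) (e : m ≃ k) :
    (M * Mᵀ).det = (M.submatrix id e).det ^ 2 := by
  rw [← submatrix_id_id (M * Mᵀ), submatrix_mul M Mᵀ id e id e.bijective, det_mul,
    ← transpose_submatrix, det_transpose, sq]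

/-- The block `A_{s,t}` of `A` with row set `s` and column set `t`. -/
abbrev subBlock {α β R : Type*} (A : Matrix α β R) (s : Finset α) (t : Finset β) : Matrix s t R :=
  A.submatrix (↑) (↑)

section RowBasis

variable {α β K : Type*} [Field K]

/-- The rows indexed by `u ⊆ s` form a basis of the row space of `A_{s,t}`. Column bases of
`A_{s,t}` are encoded as row bases of `(Aᵀ)_{t,s}`. -/
def IsRowBasis (A : Matrix α β K) (s : Finset α) (t : Finset β) (u : Finset α) : Prop :=
  u ⊆ s ∧ LinearIndependent K (subBlock A u t).row ∧
    Submodule.span K (Set.range (subBlock A u t).row) =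
      Submodule.span K (Set.range (subBlock A s t).row)

variable {A : Matrix α β K} {s u : Finset α} {t F : Finset β}

theorem rank_subBlock_transpose : (subBlock Aᵀ t s).rank = (subBlock A s t).rank :=
  rank_transpose (subBlock A s t)

theorem isRowBasis_iff_card_eq_rank :
    IsRowBasis A s t u ↔
      u ⊆ s ∧ LinearIndependent K (subBlock A u t).row ∧ #u = (subBlock A s t).rank := by
  refine and_congr_right fun hus ↦ and_congr_right fun hli ↦ ?_
  have finrank_span : Module.finrank K (Submodule.span K (Set.range (subBlock A u t).row)) = #u :=
    (finrank_span_eq_card hli).trans (Fintype.card_coe u)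
  have rows_subset : Set.range (subBlock A u t).row ⊆ Set.range (subBlock A s t).row :=
    Set.range_subset_iff.mpr fun r ↦ ⟨⟨r, hus r.2⟩, rfl⟩
  rw [rank_eq_finrank_span_row, ← finrank_span]
  exact ⟨fun h ↦ by rw [h], Submodule.eq_of_le_of_finrank_eq (Submodule.span_mono rows_subset)⟩

namespace IsRowBasis

theorem card_eq_rank (hu : IsRowBasis A s t u) : #u = (subBlock A s t).rank :=
  (isRowBasis_iff_card_eq_rank.mp hu).2.2

theorem card_transpose_eq (hu : IsRowBasis A s t u) (hF : IsRowBasis Aᵀ t s F) : #F = #u := by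
  rw [hu.card_eq_rank, hF.card_eq_rank, rank_subBlock_transpose]

theorem transpose_of_det_ne_zero [DecidableEq α] (hu : IsRowBasis A s t u) (hF : F ⊆ t)
    (e : u ≃ F) (hdet : ((subBlock A u F).submatrix id e).det ≠ 0) : IsRowBasis Aᵀ t s F := by
  refine isRowBasis_iff_card_eq_rank.mpr ⟨hF, ?_, ?_⟩
  · let restrict : (s → K) →ₗ[K] (u → K) := LinearMap.funLeft K K fun r ↦ ⟨r, hu.1 r.2⟩
    rw [← linearIndependent_equiv e]
    exact .of_comp restrict (linearIndependent_cols_of_det_ne_zero hdet)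
  · rw [rank_subBlock_transpose, ← hu.card_eq_rank, card_eq_of_equiv e]

end IsRowBasis

end RowBasis

section MatrixTree

variable {α β R K : Type*} [DecidableEq α] [CommRing R] [Field K] {φ : R →+* K}
  {s u : Finset α} {t F : Finset β}

theorem det_subBlock_mul_transpose_eq_sum (A : Matrix α β R) (u : Finset α) (t : Finset β) :
    (subBlock A u t * (subBlock A u t)ᵀ).det =
      ∑ F ∈ t.powersetCard #u, (subBlock A u F * (subBlock A u F)ᵀ).det := by
  rw [← Fintype.card_coe u]
  exact cauchy_binet (A.submatrix ((↑) : u → α) id) (A.submatrix ((↑) : u → α) id)ᵀ t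

theorem det_subBlock_mul_transpose_eq_zero {A : Matrix α β R} (hφ : Function.Injective φ)
    (hu : IsRowBasis (A.map φ) s t u) (hFt : F ⊆ t) (hFu : #F = #u)
    (hF : ¬IsRowBasis (A.map φ)ᵀ t s F) : (subBlock A u F * (subBlock A u F)ᵀ).det = 0 := by
  let e : u ≃ F := equivOfCardEq hFu.symm
  suffices ((subBlock A u F).submatrix id e).det = 0 by
    rw [det_mul_transpose_eq_sq _ e, this, zero_pow two_ne_zero]
  rw [← map_eq_zero_iff φ hφ, RingHom.map_det]
  by_contra hdet
  exact hF (hu.transpose_of_det_ne_zero hFt e hdet)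

open scoped Classical in
/-- `A`, `s`, `t`, `u` play the roles of `∂`, `G_{d-1}`, `G_d`, `R̄`, and `φ` that of the embedding
of `ℤ` into `ℚ`, over which bases are taken. -/
theorem simplicial_matrix_tree_theorem_general (A : Matrix α β R) (hφ : Function.Injective φ)
    (hu : IsRowBasis (A.map φ) s t u)
    (e : ∀ F : Finset β, IsRowBasis (A.map φ)ᵀ t s F → (u ≃ F)) :
    (∑ F ∈ t.powerset,
        if h : IsRowBasis (A.map φ)ᵀ t s F then ((subBlock A u F).submatrix id (e F h)).det ^ 2
        else 0) =
      (subBlock A u t * (subBlock A u t)ᵀ).det := by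
  have mem_of_isRowBasis (F : Finset β) (h : IsRowBasis (A.map φ)ᵀ t s F) : F ∈ t.powersetCard #u :=
    mem_powersetCard.mpr ⟨h.1, hu.card_transpose_eq h⟩
  have powersetCard_subset : t.powersetCard #u ⊆ t.powerset := fun F hF ↦
    mem_powerset.mpr (mem_powersetCard.mp hF).1
  rw [det_subBlock_mul_transpose_eq_sum,
    ← sum_subset powersetCard_subset fun F _ hF ↦ dif_neg (mt (mem_of_isRowBasis F) hF)]
  refine sum_congr rfl fun F hF ↦ ?_
  obtain ⟨hFt, hFu⟩ := mem_powersetCard.mp hF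
  split_ifs with h
  · rw [det_mul_transpose_eq_sq _ (e F h)]
  · rw [det_subBlock_mul_transpose_eq_zero hφ hu hFt hFu h]

end MatrixTree

open scoped Classical in
/-- simplicial matrix-tree theorem. If `R` is a root of `G`, then
`Σ_{F spanning forest of G} det(∂_{R̄,F})² = det(L_G^R)`, where `L_G^R` is obtained
from `L_G` by deleting the rows and columns indexed by the faces in `R`. -/
theorem simplicial_matrix_tree_theorem
    (n d : ℕ) (hn : 1 ≤ n) (hd : 1 ≤ d)
    (G : Finset (Finset (Fin n))) (hG : IsComplex n d G)
    (R : Finset (Finset (Fin n))) (hR : IsRootOfComplex n d G R)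
    (e : ∀ F : Finset (Finset (Fin n)), IsSpanningForest n d G F →
      ((faces G (d - 1) \ R : Finset (Finset (Fin n))) ≃ F)) :
    (∑ F ∈ (faces G d).powerset,
        if h : IsSpanningForest n d G F then
          Matrix.det (subMat n d G F R (e F h)) ^ 2
        else 0) =
      Matrix.det ((lapMat n d G).submatrix
        (fun r : (faces G (d - 1) \ R : Finset (Finset (Fin n))) =>
          (⟨r.1, (Finset.mem_sdiff.mp r.2).1⟩ :
            (faces G (d - 1) : Finset (Finset (Fin n)))))
        (fun r : (faces G (d - 1) \ R : Finset (Finset (Fin n))) =>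
          (⟨r.1, (Finset.mem_sdiff.mp r.2).1⟩ :
            (faces G (d - 1) : Finset (Finset (Fin n)))))) := by
  -- Roots, spanning forests, minors and the reduced Laplacian agree definitionally with their
  -- matrix counterparts.
  exact simplicial_matrix_tree_theorem_general (φ := Int.castRingHom ℚ) (Matrix.of incEntry)
    Int.cast_injective ⟨sdiff_subset, hR.2⟩ e
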